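/- Let X satisfy P(X = s·r^(k−1)) = p·q^(k−1) for k ≥ 1, with 0 < p < 1, q = 1 − p, s > 0, r > 1, and r·q ≥ 1. Then for all x ≥ s, P(X > x) ≥ s/(r·x). -/

import Mathlib

open MeasureTheory ProbabilityTheory Filter

theorem petersburg_tail_lower_bound
    {Ω : Type*} [MeasureSpace Ω] [IsProbabilityMeasure (ℙ : Measure Ω)]
    (X : Ω → ℝ) (hX : Measurable X) (p q s r : ℝ)
    (hp : 0 < p) (hp1 : p < 1) (hq : q = 1 - p) (hs : 0 < s) (hr : 1 < r)
    (hrq : 1 ≤ r * q)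
    (hlaw : ∀ k : ℕ, ℙ {ω | X ω = s * r ^ k} = ENNReal.ofReal (p * q ^ k)) :
    ∀ x : ℝ, s ≤ x → ENNReal.ofReal (s / (r * x)) ≤ ℙ {ω | X ω > x} := by
  intro x hx
  have hq0 : 0 < q := by linarith
  have hr0 : 0 < r := by linarith
  have hx0 : 0 < x := by linarith
  obtain ⟨n, hn, hn'⟩ := exists_nat_pow_near ((one_le_div hs).2 hx) hr
  rw [le_div_iff₀ hs] at hn
  rw [div_lt_iff₀ hs] at hn'
  have hsum : HasSum (fun k : ℕ => p * q ^ (n + 1 + k)) (q ^ (n + 1)) := by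
    have h := (hasSum_geometric_of_lt_one hq0.le (by linarith)).mul_left (p * q ^ (n + 1))
    have hpq : 1 - q = p := by linarith
    rw [hpq, mul_right_comm, mul_inv_cancel₀ hp.ne', one_mul] at h
    simpa only [pow_add, mul_assoc] using h
  have hdisj : Pairwise (Function.onFun Disjoint
      fun k : ℕ => {ω | X ω = s * r ^ (n + 1 + k)}) := by
    intro i j hij
    refine Set.disjoint_left.2 fun ω hi hj => hij ?_
    have h := mul_left_cancel₀ hs.ne' (hi.symm.trans hj)
    have := pow_right_injective₀ hr0 hr.ne' h
    omega
  calc ENNReal.ofReal (s / (r * x)) ≤ ENNReal.ofReal (q ^ (n + 1)) := by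
        refine ENNReal.ofReal_le_ofReal ((div_le_iff₀ (by positivity)).2 ?_)
        calc s ≤ (r * q) ^ (n + 1) * s := le_mul_of_one_le_left hs.le (one_le_pow₀ hrq)
          _ = q ^ (n + 1) * (r * (r ^ n * s)) := by ring
          _ ≤ q ^ (n + 1) * (r * x) := by gcongr
    _ = ∑' k : ℕ, ENNReal.ofReal (p * q ^ (n + 1 + k)) := by
        rw [← hsum.tsum_eq]
        exact ENNReal.ofReal_tsum_of_nonneg (fun k => by positivity) hsum.summable
    _ = ℙ (⋃ k : ℕ, {ω | X ω = s * r ^ (n + 1 + k)}) := by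
        rw [measure_iUnion hdisj fun k => hX (measurableSet_singleton _)]
        simp only [hlaw]
    _ ≤ ℙ {ω | X ω > x} := by
        refine measure_mono (Set.iUnion_subset fun k ω hω => ?_)
        have hω' : X ω = s * r ^ (n + 1 + k) := hω
        have hk : r ^ (n + 1) ≤ r ^ (n + 1 + k) := pow_le_pow_right₀ hr.le (by omega)
        change x < X ω
        rw [hω']
        nlinarith
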